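/- For every λ ∈ ℝ define Ω_{λ,λ+2}(X,Y)(f) = (X‴Y′ − X′Y‴)f + 2(X″Y′ − X′Y″)f′. Then Ω_{λ,λ+2} = [[C_{λ,λ+2}, C_{λ,λ}]] = −[[C_{λ+2,λ+2}, C_{λ,λ+2}]]; it is a 2-cocycle on Vect(1) with values in D_{λ,λ+2}; and there exist no α₀, α₁, α₂, α₃ ∈ ℝ such that Ω_{λ,λ+2} = ∂b, where b(X)(f) = α₀X‴f + α₁X″f′ + α₂X′f″ + α₃Xf‴. -/

import Mathlib

noncomputable section

/-- Polynomials over ℝ, identified with polynomial vector fields / densities on the line. -/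
abbrev P : Type := Polynomial ℝ

/-- Derivative d/dx. -/
def D : P → P := fun f => Polynomial.derivative f

/-- Iterated derivative: `Dk k f = f^(k)`. -/
def Dk (k : ℕ) : P → P := D^[k]

/-- Lie bracket on Vect(1): [X,Y] = XY' - X'Y. -/
def br (X Y : P) : P := X * D Y - D X * Y

/-- Action of the vector field X on λ-densities: `L_X^λ f = X f' + λ X' f`. -/
def Lw (l : ℝ) (X f : P) : P := X * D f + Polynomial.C l * D X * f

/-- Action on operators from F_ν to F_μ: `L_X^{ν,μ}(A) = L_X^μ ∘ A - A ∘ L_X^ν`. -/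
def LD (nu mu : ℝ) (X : P) (A : P → P) (f : P) : P := Lw mu X (A f) - A (Lw nu X f)

/-- 1-cocycle condition with values in D_{ν,μ}. -/
def IsCocycle1 (nu mu : ℝ) (c : P → P → P) : Prop :=
  ∀ X Y f, c (br X Y) f = LD nu mu X (c Y) f - LD nu mu Y (c X) f

/-- 2-cocycle condition with values in D_{ν,μ}. -/
def IsCocycle2 (nu mu : ℝ) (o : P → P → P → P) : Prop :=
  ∀ X Y Z f,
    LD nu mu X (o Y Z) f - LD nu mu Y (o X Z) f + LD nu mu Z (o X Y) f
      - o (br X Y) Z f + o (br X Z) Y f - o (br Y Z) X f = 0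

/-- Cup product of 1-cochains: `[[C₁,C₂]](X,Y) = C₁(X)∘C₂(Y) - C₁(Y)∘C₂(X)`. -/
def cup (c₁ c₂ : P → P → P) (X Y f : P) : P := c₁ X (c₂ Y f) - c₁ Y (c₂ X f)

/-- Coboundary of a 1-cochain b with values in D_{ν,μ}. -/
def cob (nu mu : ℝ) (b : P → P → P) (X Y f : P) : P :=
  LD nu mu X (b Y) f - LD nu mu Y (b X) f - b (br X Y) f


/-- The 2-cocycle `Ω_{λ,λ+2}`. -/
def Om2 (X Y f : P) : P :=
  (Dk 3 X * D Y - D X * Dk 3 Y) * f + 2 * (Dk 2 X * D Y - D X * Dk 2 Y) * D f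

/-!
Multiplication of densities and composition of operators are compatible with the action of vector
fields, so the cup product of two 1-cocycles is a 2-cocycle, and `Ω_{λ,λ+2}` is such a product.

For nontriviality, the terms `X‴f` and `X″f′` of `b` are cocycles, and `∂` of `X f‴` vanishes at `0`
on vector fields that vanish at `0`. There `∂b` reduces to `α₂ ∂(X′f″)`, in which the coefficients
of `(X‴Y′ - X′Y‴) f` and `(X″Y′ - X′Y″) f′` are in the ratio `λ : 2λ + 1`, never `1 : 2`.
-/

section

variable {nu mu rho kappa : ℝ} {X Y f g h : P}

lemma D_add : D (f + g) = D f + D g := Polynomial.derivative_add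

lemma D_sub : D (f - g) = D f - D g := Polynomial.derivative_sub

lemma D_neg : D (-f) = -D f := Polynomial.derivative_neg f

lemma D_mul : D (f * g) = D f * g + f * D g := Polynomial.derivative_mul

lemma D_smul (a : ℝ) : D (a • f) = a • D f := Polynomial.derivative_smul a f

lemma Dk_two : Dk 2 f = D (D f) := rfl

lemma Dk_three : Dk 3 f = D (Dk 2 f) := rfl

lemma Lw_eq_add_smul (l : ℝ) : Lw l X f = X * D f + l • (D X * f) := by
  rw [Lw, Polynomial.smul_eq_C_mul, mul_assoc]

lemma Lw_add (l : ℝ) : Lw l X (f + g) = Lw l X f + Lw l X g := by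
  simp only [Lw, D_add]
  ring

lemma Lw_sub (l : ℝ) : Lw l X (f - g) = Lw l X f - Lw l X g := by
  simp only [Lw, D_sub]
  ring

lemma Lw_smul (l a : ℝ) : Lw l X (a • f) = a • Lw l X f := by
  simp only [Lw, D_smul, mul_smul_comm, smul_add]

lemma Lw_mul (hk : rho + mu = kappa) :
    Lw kappa X (g * h) = Lw rho X g * h + g * Lw mu X h := by
  simp only [Lw, D_mul, ← hk, Polynomial.C_add]
  ring

lemma D_Lw (l : ℝ) : D (Lw l X f) = Lw (l + 1) X (D f) + l • (Dk 2 X * f) := by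
  simp only [Lw_eq_add_smul, Dk_two, D_add, D_mul, D_smul]
  module

lemma D_br : D (br X Y) = Lw 0 X (D Y) - Lw 0 Y (D X) := by
  simp only [br, Lw_eq_add_smul, D_sub, D_mul, zero_smul]
  ring

lemma LD_sub {A B : P → P} :
    LD nu mu X (fun f => A f - B f) f = LD nu mu X A f - LD nu mu X B f := by
  simp only [LD, Lw_sub]
  ring

lemma LD_comp {A B : P → P} (hA : ∀ f g, A (f - g) = A f - A g) :
    LD nu kappa X (fun f => A (B f)) f = LD mu kappa X A (B f) + A (LD nu mu X B f) := by
  simp only [LD, hA]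
  ring

lemma LD_mul {A : P → P} (hk : rho + mu = kappa) :
    LD nu kappa X (fun f => g * A f) f = Lw rho X g * A f + g * LD nu mu X A f := by
  simp only [LD, Lw_mul hk]
  ring

lemma LD_id (l : ℝ) : LD l l X id f = 0 := sub_self _

lemma LD_D (l : ℝ) : LD l (l + 1) X D f = -(l • (Dk 2 X * f)) := by
  rw [LD, D_Lw]
  ring

lemma LD_Dk_two (l : ℝ) :
    LD l (l + 2) X (Dk 2) f = -(l • (Dk 3 X * f) + (2 * l + 1) • (Dk 2 X * D f)) := by
  have hD : LD (l + 1) (l + 2) X D (D f) = -((l + 1) • (Dk 2 X * D f)) := by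
    rw [← LD_D, add_assoc, one_add_one_eq_two]
  calc LD l (l + 2) X (Dk 2) f
      = LD (l + 1) (l + 2) X D (D f) + D (LD l (l + 1) X D f) :=
      LD_comp (A := D) (B := D) fun _ _ => D_sub
    _ = -((l + 1) • (Dk 2 X * D f)) + -(l • (Dk 3 X * f + Dk 2 X * D f)) := by
      rw [hD, LD_D, D_neg, D_smul, D_mul, Dk_three]
    _ = _ := by module

lemma cob_add (b c : P → P → P) : cob nu mu (b + c) = cob nu mu b + cob nu mu c := by
  funext X Y f
  simp only [cob, LD, Pi.add_apply, Lw_add]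
  ring

lemma cob_smul (a : ℝ) (b : P → P → P) : cob nu mu (a • b) = a • cob nu mu b := by
  funext X Y f
  simp only [cob, LD, Pi.smul_apply, Lw_smul, smul_sub]

lemma isCocycle1_iff_cob_eq_zero {c : P → P → P} : IsCocycle1 nu mu c ↔ cob nu mu c = 0 := by
  simp only [IsCocycle1, funext_iff, cob, Pi.zero_apply, sub_eq_zero, eq_comm]

lemma IsCocycle1.add {b c : P → P → P} (hb : IsCocycle1 nu mu b) (hc : IsCocycle1 nu mu c) :
    IsCocycle1 nu mu (b + c) := by
  rw [isCocycle1_iff_cob_eq_zero] at *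
  rw [cob_add, hb, hc, add_zero]

lemma IsCocycle1.smul {c : P → P → P} (a : ℝ) (hc : IsCocycle1 nu mu c) :
    IsCocycle1 nu mu (a • c) := by
  rw [isCocycle1_iff_cob_eq_zero] at *
  rw [cob_smul, hc, smul_zero]

theorem isCocycle2_cup {c₁ c₂ : P → P → P} (h₁ : IsCocycle1 mu kappa c₁)
    (h₂ : IsCocycle1 nu mu c₂) (hsub : ∀ X f g, c₁ X (f - g) = c₁ X f - c₁ X g) :
    IsCocycle2 nu kappa (cup c₁ c₂) := by
  intro X Y Z f
  have LD_cup (U V W : P) : LD nu kappa U (cup c₁ c₂ V W) f =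
      (LD mu kappa U (c₁ V) (c₂ W f) + c₁ V (LD nu mu U (c₂ W) f)) -
        (LD mu kappa U (c₁ W) (c₂ V f) + c₁ W (LD nu mu U (c₂ V) f)) := by
    rw [← LD_comp (hsub V), ← LD_comp (hsub W)]
    exact LD_sub
  simp only [LD_cup, cup, h₁ _ _ _, h₂ _ _ _, hsub]
  ring

/-- The 1-cocycle condition for a cochain `g` with values in the densities `F_rho`. -/
def IsDensityCocycle (rho : ℝ) (g : P → P) : Prop :=
  ∀ X Y, g (br X Y) = Lw rho X (g Y) - Lw rho Y (g X)

lemma isDensityCocycle_D : IsDensityCocycle 0 D := fun _ _ => D_br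

lemma isDensityCocycle_Dk_two : IsDensityCocycle 1 (Dk 2) := by
  intro X Y
  rw [Dk_two, D_br, D_sub, D_Lw, D_Lw, zero_smul, zero_smul, add_zero, add_zero, zero_add]
  rfl

lemma isDensityCocycle_Dk_three : IsDensityCocycle 2 (Dk 3) := by
  intro X Y
  rw [Dk_three, isDensityCocycle_Dk_two, D_sub, D_Lw, D_Lw, one_add_one_eq_two, ← Dk_three,
    ← Dk_three, mul_comm (Dk 2 Y), add_sub_add_right_eq_sub]

lemma IsDensityCocycle.cob_mul {u : P → P} (hu : IsDensityCocycle rho u) (A : P → P)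
    (hk : rho + mu = kappa) :
    cob nu kappa (fun X f => u X * A f) X Y f =
      u Y * LD nu mu X A f - u X * LD nu mu Y A f := by
  simp only [cob, LD_mul hk, hu X Y]
  ring

lemma IsDensityCocycle.isCocycle1_mul {u : P → P} (hu : IsDensityCocycle rho u)
    (hk : rho + nu = kappa) : IsCocycle1 nu kappa fun X f => u X * f := by
  refine isCocycle1_iff_cob_eq_zero.2 <| funext₃ fun X Y f => (hu.cob_mul id hk).trans ?_
  simp only [LD_id, mul_zero, sub_zero, Pi.zero_apply]

/-- The 1-cochain `C_{λ,λ}`, given by the same formula for all `λ`. -/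
def C0 (X f : P) : P := D X * f

lemma isCocycle1_C0 (l : ℝ) : IsCocycle1 l l C0 := isDensityCocycle_D.isCocycle1_mul (zero_add l)

lemma isCocycle1_Dk_three_mul (l : ℝ) : IsCocycle1 l (l + 2) fun X f => Dk 3 X * f :=
  isDensityCocycle_Dk_three.isCocycle1_mul (add_comm 2 l)

lemma isCocycle1_Dk_two_mul_D (l : ℝ) : IsCocycle1 l (l + 2) fun X f => Dk 2 X * D f := by
  refine isCocycle1_iff_cob_eq_zero.2 <| funext₃ fun X Y f => ?_
  rw [isDensityCocycle_Dk_two.cob_mul D (mu := l + 1) (by ring), LD_D, LD_D, Pi.zero_apply,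
    Pi.zero_apply, Pi.zero_apply]
  simp only [Polynomial.smul_eq_C_mul]
  ring

/-- The 1-cochain `C_{λ,λ+2}`, given by the same formula for all `λ`. -/
def C2 (X f : P) : P := Dk 3 X * f + 2 * Dk 2 X * D f

lemma isCocycle1_C2 (l : ℝ) : IsCocycle1 l (l + 2) C2 := by
  convert (isCocycle1_Dk_three_mul l).add ((isCocycle1_Dk_two_mul_D l).smul 2) using 1
  funext X f
  simp only [C2, Pi.add_apply, Pi.smul_apply, Polynomial.smul_eq_C_mul, Polynomial.C_ofNat,
    mul_assoc]

lemma C2_sub : C2 X (f - g) = C2 X f - C2 X g := by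
  simp only [C2, D_sub]
  ring

lemma Om2_eq_cup_C2_C0 : Om2 = cup C2 C0 := by
  funext X Y f
  simp only [Om2, cup, C2, C0, D_mul, Dk_two]
  ring

lemma Om2_eq_neg_cup_C0_C2 : Om2 = -cup C0 C2 := by
  funext X Y f
  simp only [Om2, cup, C2, C0, Pi.neg_apply]
  ring

theorem isCocycle2_Om2 (l : ℝ) : IsCocycle2 l (l + 2) Om2 :=
  Om2_eq_cup_C2_C0 ▸ isCocycle2_cup (isCocycle1_C2 l) (isCocycle1_C0 l) fun _ _ _ => C2_sub

lemma cob_D_mul_Dk_two (l : ℝ) :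
    cob l (l + 2) (fun X f => D X * Dk 2 f) X Y f =
      -(l • ((Dk 3 X * D Y - D X * Dk 3 Y) * f) +
        (2 * l + 1) • ((Dk 2 X * D Y - D X * Dk 2 Y) * D f)) := by
  rw [isDensityCocycle_D.cob_mul (Dk 2) (zero_add _), LD_Dk_two, LD_Dk_two]
  simp only [Polynomial.smul_eq_C_mul]
  ring

lemma eval_cob_mul_eq_zero (A : P → P) {t : ℝ} (hX : X.eval t = 0) (hY : Y.eval t = 0) :
    (cob nu mu (fun X f => X * A f) X Y f).eval t = 0 := by
  simp [cob, LD, Lw, br, D, hX, hY]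

theorem Om2_ne_cob (l a : ℝ) {c : P → P → P} (hc : IsCocycle1 l (l + 2) c) (A : P → P) :
    Om2 ≠ cob l (l + 2) (c + a • (fun X f => D X * Dk 2 f) + fun X f => X * A f) := by
  intro hcob
  have coeff_relation {X Y : P} (hX : X.eval 0 = 0) (hY : Y.eval 0 = 0) (f : P) :
      (1 + a * l) * ((Dk 3 X * D Y - D X * Dk 3 Y) * f).eval 0 +
        (2 + a * (2 * l + 1)) * ((Dk 2 X * D Y - D X * Dk 2 Y) * D f).eval 0 = 0 := by
    have hOm2 := congrArg (Polynomial.eval 0) (congrFun₃ hcob X Y f)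
    rw [cob_add, cob_add, isCocycle1_iff_cob_eq_zero.1 hc, cob_smul, zero_add] at hOm2
    simp only [Om2, Pi.add_apply, Pi.smul_apply, cob_D_mul_Dk_two, Polynomial.eval_add,
      Polynomial.eval_smul, Polynomial.eval_neg, Polynomial.eval_mul, Polynomial.eval_ofNat,
      eval_cob_mul_eq_zero A hX hY, smul_eq_mul] at hOm2 ⊢
    linear_combination hOm2
  have h_f : 1 + a * l = 0 := by
    have := coeff_relation (X := .X ^ 3) (Y := .X) (by simp) (by simp) 1
    simpa [Dk_three, Dk_two, D, two_add_one_eq_three] using this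
  have h_Df : 2 + a * (2 * l + 1) = 0 := by
    have := coeff_relation (X := .X ^ 2) (Y := .X) (by simp) (by simp) .X
    simpa [Dk_three, Dk_two, D] using this
  have ha : a = 0 := by linear_combination h_Df - 2 * h_f
  simp [ha] at h_f

end

/-- `Ω_{λ,λ+2} = [[C_{λ,λ+2},C_{λ,λ}]] = -[[C_{λ+2,λ+2},C_{λ,λ+2}]]` is a
nontrivial 2-cocycle with values in `D_{λ,λ+2}`. -/
theorem Om2_nontrivial_two_cocycle (l : ℝ) :
    (∀ X Y f : P, Om2 X Y f =
      cup (fun X f => Dk 3 X * f + 2 * Dk 2 X * D f) (fun X f => D X * f) X Y f) ∧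
    (∀ X Y f : P, Om2 X Y f =
      - cup (fun X f => D X * f) (fun X f => Dk 3 X * f + 2 * Dk 2 X * D f) X Y f) ∧
    IsCocycle2 l (l + 2) Om2 ∧
    ¬ ∃ a0 a1 a2 a3 : ℝ, ∀ X Y f : P, Om2 X Y f =
      cob l (l + 2) (fun X f => Polynomial.C a0 * Dk 3 X * f
        + Polynomial.C a1 * Dk 2 X * D f + Polynomial.C a2 * D X * Dk 2 f
        + Polynomial.C a3 * X * Dk 3 f) X Y f := by
  refine ⟨congrFun₃ Om2_eq_cup_C2_C0, congrFun₃ Om2_eq_neg_cup_C0_C2, isCocycle2_Om2 l, ?_⟩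
  rintro ⟨a0, a1, a2, a3, hb⟩
  have hc := ((isCocycle1_Dk_three_mul l).smul a0).add ((isCocycle1_Dk_two_mul_D l).smul a1)
  refine Om2_ne_cob l a2 hc (fun f => a3 • Dk 3 f) (funext₃ fun X Y f => (hb X Y f).trans ?_)
  congr 1
  funext X f
  simp only [Pi.add_apply, Pi.smul_apply, Polynomial.smul_eq_C_mul]
  ring
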